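/- Let α be real with 0 < α < 2 and let M ≥ 1 be a natural number. Then the M × M Toeplitz matrix P with entries P_{ij} = w_{i−j}^α (1 ≤ i, j ≤ M) is symmetric and positive definite, where w_k^α = (−1)^k Γ(α+1) / (Γ(α/2 − k + 1) Γ(α/2 + k + 1)). -/

import Mathlib

open Real Matrix

/-- The fractional centered-difference weights
`w_k^α = (−1)^k Γ(α+1) / (Γ(α/2 − k + 1) Γ(α/2 + k + 1))`. -/
noncomputable def fracWeight (α : ℝ) (k : ℤ) : ℝ :=
  (-1 : ℝ) ^ k * Real.Gamma (α + 1) /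
    (Real.Gamma (α / 2 - k + 1) * Real.Gamma (α / 2 + k + 1))

lemma fracWeight_neg (α : ℝ) (k : ℤ) : fracWeight α (-k) = fracWeight α k := by
  unfold fracWeight
  rw [_root_.zpow_neg, ← _root_.inv_zpow, inv_neg, inv_one]
  push_cast
  rw [sub_neg_eq_add, ← sub_eq_add_neg, mul_comm (Real.Gamma (α / 2 + k + 1))]

lemma half_ne_int (α : ℝ) (hα0 : 0 < α) (hα2 : α < 2) (k : ℤ) : α / 2 ≠ k := by
  intro h
  have h1 : (0 : ℝ) < k := by linarith
  have h2 : (k : ℝ) < 1 := by linarith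
  have h1' : 0 < k := by exact_mod_cast h1
  have h2' : k < 1 := by exact_mod_cast h2
  omega

lemma fracWeight_succ (α : ℝ) (hα0 : 0 < α) (hα2 : α < 2) (k : ℤ) :
    fracWeight α (k + 1) * (α / 2 + k + 1) = fracWeight α k * (k - α / 2) := by
  have h1 : α / 2 + k + 1 ≠ 0 := by
    have := half_ne_int α hα0 hα2 (-k - 1)
    push_cast at this
    intro h
    apply this
    linarith
  have h2 : α / 2 - k ≠ 0 := sub_ne_zero.mpr (half_ne_int α hα0 hα2 k)
  have g1 := Real.Gamma_add_one h1
  have g2 := Real.Gamma_add_one h2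
  have n1 : Real.Gamma (α / 2 + k + 1) ≠ 0 := by
    apply Real.Gamma_ne_zero
    intro m h
    apply half_ne_int α hα0 hα2 (-k - 1 - m)
    push_cast
    linarith
  have n2 : Real.Gamma (α / 2 - k) ≠ 0 := by
    apply Real.Gamma_ne_zero
    intro m h
    apply half_ne_int α hα0 hα2 (k - m)
    push_cast
    linarith
  unfold fracWeight
  rw [zpow_add₀ (by norm_num), zpow_one]
  push_cast
  rw [show α / 2 - ((k : ℝ) + 1) + 1 = α / 2 - k by ring,
    show α / 2 + ((k : ℝ) + 1) + 1 = α / 2 + k + 1 + 1 by ring, g1, g2]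
  generalize Real.Gamma (α / 2 + k + 1) = A at *
  generalize Real.Gamma (α / 2 - k) = B at *
  generalize Real.Gamma (α + 1) = C at *
  generalize (-1 : ℝ) ^ k = D at *
  generalize hu : α / 2 + k + 1 = u at *
  have h3 : (k : ℝ) - α / 2 = -(α / 2 - k) := by ring
  rw [h3]
  generalize α / 2 - (k : ℝ) = v at *
  field_simp

lemma fracWeight_zero_pos (α : ℝ) (hα0 : 0 < α) : 0 < fracWeight α 0 := by
  unfold fracWeight
  have h1 : 0 < Real.Gamma (α + 1) := Real.Gamma_pos_of_pos (by linarith)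
  have h2 : 0 < Real.Gamma (α / 2 + 1) := Real.Gamma_pos_of_pos (by linarith)
  simp only [zpow_zero, Int.cast_zero, sub_zero, add_zero]
  positivity

lemma fracWeight_nat_neg (α : ℝ) (hα0 : 0 < α) (hα2 : α < 2) (n : ℕ) :
    fracWeight α ((n : ℤ) + 1) < 0 := by
  induction n with
  | zero =>
    have h := fracWeight_succ α hα0 hα2 0
    have h0 := fracWeight_zero_pos α hα0
    simp only [Int.cast_zero] at h
    have : fracWeight α 0 * (0 - α / 2) < 0 := mul_neg_of_pos_of_neg h0 (by linarith)
    rw [← h] at this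
    exact neg_of_mul_neg_left this (by linarith)
  | succ n ih =>
    have h := fracWeight_succ α hα0 hα2 ((n : ℤ) + 1)
    push_cast at h ⊢
    have hn : (0 : ℝ) ≤ n := n.cast_nonneg
    have : fracWeight α ((n : ℤ) + 1) * ((n : ℝ) + 1 - α / 2) < 0 :=
      mul_neg_of_neg_of_pos ih (by linarith)
    rw [← h] at this
    exact neg_of_mul_neg_left this (by linarith)

lemma fracWeight_pos_neg (α : ℝ) (hα0 : 0 < α) (hα2 : α < 2) (k : ℤ) (hk : 0 < k) :
    fracWeight α k < 0 := by
  have := fracWeight_nat_neg α hα0 hα2 (k - 1).toNat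
  rwa [show (((k - 1).toNat : ℕ) : ℤ) + 1 = k by omega] at this

lemma fracWeight_ne_neg (α : ℝ) (hα0 : 0 < α) (hα2 : α < 2) (k : ℤ) (hk : k ≠ 0) :
    fracWeight α k < 0 := by
  rcases lt_or_gt_of_ne hk with h | h
  · rw [← fracWeight_neg]
    exact fracWeight_pos_neg α hα0 hα2 _ (by omega)
  · exact fracWeight_pos_neg α hα0 hα2 _ h

lemma fracWeight_sum (α : ℝ) (hα0 : 0 < α) (hα2 : α < 2) (i : ℤ) (M : ℕ) :
    α * ∑ j ∈ Finset.range M, fracWeight α (i - j) =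
      fracWeight α i * (α / 2 - i) - fracWeight α (i - M) * (α / 2 - (i - M)) := by
  induction M with
  | zero => simp
  | succ n ih =>
    have h := fracWeight_succ α hα0 hα2 (i - n - 1)
    rw [Finset.sum_range_succ, mul_add, ih]
    push_cast at h ⊢
    rw [sub_add_cancel] at h
    rw [show i - ((n : ℤ) + 1) = i - n - 1 by ring]
    linarith

lemma fracWeight_sum_pos (α : ℝ) (hα0 : 0 < α) (hα2 : α < 2) (M : ℕ) (i : Fin M) :
    0 < ∑ j : Fin M, fracWeight α ((i : ℤ) - (j : ℤ)) := by
  rw [Fin.sum_univ_eq_sum_range (fun j : ℕ => fracWeight α ((i : ℤ) - (j : ℤ)))]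
  have h := fracWeight_sum α hα0 hα2 i M
  have hi := i.2
  have h1 : 0 < fracWeight α (i : ℤ) * (α / 2 - ((i : ℤ) : ℝ)) := by
    rcases Nat.eq_zero_or_pos (i : ℕ) with h0 | h0
    · rw [h0]
      have := fracWeight_zero_pos α hα0
      simp only [Nat.cast_zero, Int.cast_zero, sub_zero]
      positivity
    · have : (1 : ℝ) ≤ ((i : ℕ) : ℝ) := by exact_mod_cast h0
      apply mul_pos_of_neg_of_neg
      · exact fracWeight_pos_neg α hα0 hα2 _ (by omega)
      · push_cast
        linarith
  have h2 : fracWeight α ((i : ℤ) - M) * (α / 2 - (((i : ℤ) : ℝ) - M)) < 0 := by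
    have : ((i : ℕ) : ℝ) < M := by exact_mod_cast hi
    apply mul_neg_of_neg_of_pos
    · exact fracWeight_ne_neg α hα0 hα2 _ (by omega)
    · push_cast
      linarith
  have h3 : 0 < α * ∑ j ∈ Finset.range M, fracWeight α ((i : ℤ) - (j : ℤ)) := by
    rw [h]
    linarith
  exact pos_of_mul_pos_right h3 hα0.le

/-- Symmetric matrices with nonpositive off-diagonal entries and positive row sums are
positive definite. -/
lemma posDef_of_row_sum_pos {n : ℕ} (P : Matrix (Fin n) (Fin n) ℝ) (hs : P.IsSymm)
    (ho : ∀ i j, i ≠ j → P i j ≤ 0) (hr : ∀ i, 0 < ∑ j, P i j) : P.PosDef := by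
  refine Matrix.PosDef.of_dotProduct_mulVec_pos ?_ ?_
  · simpa [Matrix.IsHermitian, Matrix.IsSymm] using hs
  intro x hx
  have key : star x ⬝ᵥ (P *ᵥ x) =
      ∑ i, (∑ j, P i j) * x i ^ 2 + 1 / 2 * ∑ i, ∑ j, (-P i j) * (x i - x j) ^ 2 := by
    have e1 : star x ⬝ᵥ (P *ᵥ x) = ∑ i, ∑ j, P i j * x i * x j := by
      simp only [dotProduct, mulVec, Finset.mul_sum, star_trivial]
      refine Finset.sum_congr rfl fun i _ => Finset.sum_congr rfl fun j _ => ?_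
      ring
    have e2 : ∑ i, ∑ j, P i j * x j ^ 2 = ∑ i, ∑ j, P i j * x i ^ 2 := by
      rw [Finset.sum_comm]
      refine Finset.sum_congr rfl fun i _ => Finset.sum_congr rfl fun j _ => ?_
      rw [hs.apply]
    have e3 : ∑ i, ∑ j, (-P i j) * (x i - x j) ^ 2 =
        2 * ∑ i, ∑ j, P i j * x i * x j - ∑ i, ∑ j, P i j * x i ^ 2
          - ∑ i, ∑ j, P i j * x j ^ 2 := by
      simp only [Finset.mul_sum, ← Finset.sum_sub_distrib]
      refine Finset.sum_congr rfl fun i _ => Finset.sum_congr rfl fun j _ => ?_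
      ring
    rw [e1, e3, e2]
    simp only [Finset.sum_mul]
    ring
  rw [key]
  obtain ⟨i, hi⟩ := Function.ne_iff.mp hx
  have hi' : x i ≠ 0 := hi
  apply add_pos_of_pos_of_nonneg
  · apply Finset.sum_pos'
    · exact fun j _ => mul_nonneg (hr j).le (sq_nonneg _)
    · exact ⟨i, Finset.mem_univ _, mul_pos (hr i) (by positivity)⟩
  · apply mul_nonneg (by norm_num)
    refine Finset.sum_nonneg fun i _ => Finset.sum_nonneg fun j _ => ?_
    by_cases hij : i = j
    · simp [hij]
    · exact mul_nonneg (by linarith [ho i j hij]) (sq_nonneg _)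

/-- Let `α` be real with `0 < α < 2` and let `M ≥ 1` be a natural number.
Then the `M × M` Toeplitz matrix `P` with entries `P_{ij} = w_{i−j}^α` is symmetric
and positive definite. -/
theorem toeplitz_fracWeight_posDef (α : ℝ) (hα0 : 0 < α) (hα2 : α < 2)
    (M : ℕ) (hM : 1 ≤ M) :
    let P : Matrix (Fin M) (Fin M) ℝ := fun i j => fracWeight α ((i : ℤ) - (j : ℤ))
    P.IsSymm ∧ P.PosDef := by
  intro P
  have hs : P.IsSymm := by
    apply Matrix.IsSymm.ext
    intro i j
    change fracWeight α ((j : ℤ) - (i : ℤ)) = fracWeight α ((i : ℤ) - (j : ℤ))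
    rw [← fracWeight_neg, neg_sub]
  refine ⟨hs, posDef_of_row_sum_pos P hs ?_ ?_⟩
  · intro i j hij
    have : (i : ℕ) ≠ (j : ℕ) := fun h => hij (Fin.ext h)
    exact (fracWeight_ne_neg α hα0 hα2 _ (by omega)).le
  · exact fracWeight_sum_pos α hα0 hα2 M
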